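/- arXiv:2002.00559 — 3 statements merged into one kernel-verified Lean document; each statement's English description precedes it below -/
import Mathlib

section
/- Let c, d, s be positive integers with c ≤ s and d ≤ s, and let q be a prime power. Let E be a random matrix distributed uniformly over the set of s×s matrices with entries in the finite field F_q. Let F be a fixed full-rank c×s matrix over F_q and G a fixed full-rank s×d matrix over F_q. Then the conditional Shannon entropy in base q of the matrix FE given the matrix EG satisfies H_q(FE | EG) ≥ cs − cd. -/
open Finset Matrix

/-- `pr p X x` is the probability that the random variable `X` (on a finite sample
space with probability mass function `p`) takes the value `x`. -/
noncomputable def pr {Ω α : Type*} [Fintype Ω] [DecidableEq α]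
    (p : Ω → ℝ) (X : Ω → α) (x : α) : ℝ :=
  ∑ ω, if X ω = x then p ω else 0

/-- Shannon entropy in base `q` of the random variable `X`. -/
noncomputable def Hq {Ω α : Type*} [Fintype Ω] [Fintype α] [DecidableEq α]
    (q : ℕ) (p : Ω → ℝ) (X : Ω → α) : ℝ :=
  -∑ x : α, pr p X x * Real.logb q (pr p X x)

/-- Conditional Shannon entropy in base `q`: `H_q(X | Y) = H_q(X, Y) - H_q(Y)`. -/
noncomputable def condHq {Ω α β : Type*} [Fintype Ω] [Fintype α] [Fintype β]
    [DecidableEq α] [DecidableEq β]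
    (q : ℕ) (p : Ω → ℝ) (X : Ω → α) (Y : Ω → β) : ℝ :=
  Hq q p (fun ω => (X ω, Y ω)) - Hq q p Y

theorem Hq_linear {K V W : Type*} [Field K] [Fintype K] [AddCommGroup V] [Module K V]
    [AddCommGroup W] [Module K W] [Fintype V] [Fintype W] [DecidableEq W]
    (f : V →ₗ[K] W) (g : V → W) (hg : ∀ v, g v = f v) :
    Hq (Fintype.card K) (fun _ : V => (1 : ℝ) / Fintype.card V) g
      = Module.finrank K (LinearMap.range f) := by
  classical
  obtain rfl : g = f := funext hg
  have hq1 : (1 : ℝ) < Fintype.card K := by exact_mod_cast Fintype.one_lt_card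
  have hq0 : (0 : ℝ) < Fintype.card K := by linarith
  have hV : (Fintype.card V : ℝ) ≠ 0 := by
    exact_mod_cast Fintype.card_ne_zero
  set p : V → ℝ := fun _ => (1 : ℝ) / Fintype.card V with hp
  have hsum : ∑ x, pr p f x = 1 := by
    unfold pr
    rw [Finset.sum_comm]
    simp [hp, hV]
  have hker : pr p f 0 = ((Fintype.card K : ℝ) ^ Module.finrank K (LinearMap.range f))⁻¹ := by
    have h1 : (Fintype.card V : ℝ) = (Fintype.card K : ℝ) ^ Module.finrank K V := by
      exact_mod_cast Module.card_eq_pow_finrank (K := K) (V := V)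
    have h2 : (Fintype.card (LinearMap.ker f) : ℝ)
        = (Fintype.card K : ℝ) ^ Module.finrank K (LinearMap.ker f) := by
      exact_mod_cast Module.card_eq_pow_finrank (K := K) (V := LinearMap.ker f)
    have h3 : (Finset.univ.filter (fun v => f v = 0)).card = Fintype.card (LinearMap.ker f) := by
      rw [Fintype.card_subtype]
      simp [LinearMap.mem_ker]
    have h4 := LinearMap.finrank_range_add_finrank_ker f
    unfold pr
    rw [← Finset.sum_filter, Finset.sum_const, h3, nsmul_eq_mul, h2]
    rw [h1, ← h4, pow_add]
    field_simp
  have hterm : ∀ x, pr p f x * Real.logb (Fintype.card K) (pr p f x)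
      = -(Module.finrank K (LinearMap.range f) : ℝ) * pr p f x := by
    intro x
    by_cases hx : ∃ v, f v = x
    · obtain ⟨v, rfl⟩ := hx
      have : pr p f (f v) = pr p f 0 := by
        unfold pr
        apply Fintype.sum_equiv (Equiv.subRight v)
        intro w
        simp [hp, sub_eq_zero]
      rw [this, hker, Real.logb_inv, Real.logb_pow, Real.logb_self_eq_one hq1]
      ring
    · have : pr p f x = 0 := by
        unfold pr
        apply Finset.sum_eq_zero
        intro w _
        rw [if_neg (fun h => hx ⟨w, h⟩)]
      simp [this]
  unfold Hq
  rw [Finset.sum_congr rfl (fun x _ => hterm x), ← Finset.mul_sum, hsum]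
  ring

/-- If `E` is a uniformly random `s × s` matrix over the finite field with `q`
elements, `F` is a fixed full-rank `c × s` matrix and `G` is a fixed full-rank
`s × d` matrix, then `H_q(FE | EG) ≥ cs - cd`. -/
theorem stmt0 (c d s q : ℕ) (hc : 0 < c) (hd : 0 < d) (hs : 0 < s)
    (hcs : c ≤ s) (hds : d ≤ s)
    (K : Type) [Field K] [Fintype K] [DecidableEq K] (hq : Fintype.card K = q)
    (F : Matrix (Fin c) (Fin s) K) (G : Matrix (Fin s) (Fin d) K)
    (hF : F.rank = c) (hG : G.rank = d) :
    (c : ℝ) * s - (c : ℝ) * d ≤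
      condHq q
        (fun _ : Matrix (Fin s) (Fin s) K =>
          (1 : ℝ) / Fintype.card (Matrix (Fin s) (Fin s) K))
        (fun E => F * E) (fun E => E * G) := by
  subst hq
  let L1 : Matrix (Fin s) (Fin s) K →ₗ[K] Matrix (Fin c) (Fin s) K :=
    { toFun := fun E => F * E
      map_add' := fun a b => Matrix.mul_add _ _ _
      map_smul' := fun a b => Matrix.mul_smul _ _ _ }
  let L2 : Matrix (Fin s) (Fin s) K →ₗ[K] Matrix (Fin s) (Fin d) K :=
    { toFun := fun E => E * G
      map_add' := fun a b => Matrix.add_mul _ _ _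
      map_smul' := fun a b => Matrix.smul_mul _ _ _ }
  let M : Matrix (Fin c) (Fin s) K →ₗ[K] Matrix (Fin c) (Fin d) K :=
    { toFun := fun E => E * G
      map_add' := fun a b => Matrix.add_mul _ _ _
      map_smul' := fun a b => Matrix.smul_mul _ _ _ }
  have hFs : Function.Surjective F.mulVec := by
    have : LinearMap.range F.mulVecLin = ⊤ := by
      apply Submodule.eq_top_of_finrank_eq
      rw [← Matrix.rank, hF]
      simp
    exact LinearMap.range_eq_top.mp this
  obtain ⟨F', hF'⟩ := Matrix.mulVec_surjective_iff_exists_right_inverse.mp hFs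
  unfold condHq
  rw [Hq_linear (L1.prod L2) (fun E => (F * E, E * G)) (fun _ => rfl),
    Hq_linear L2 (fun E => E * G) (fun _ => rfl)]
  have e1 := LinearMap.finrank_range_add_finrank_ker (L1.prod L2)
  have e2 := LinearMap.finrank_range_add_finrank_ker L2
  have e3 := LinearMap.finrank_range_add_finrank_ker M
  have e4 := LinearMap.finrank_range_add_finrank_ker (L1.domRestrict (LinearMap.ker L2))
  have e5 : Module.finrank K (LinearMap.range M) ≤ c * d := by
    refine (Submodule.finrank_le _).trans ?_
    simp [Module.finrank_matrix]
  have e6 : Module.finrank K (Matrix (Fin c) (Fin s) K) = c * s := by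
    simp [Module.finrank_matrix]
  have e7 : Module.finrank K (LinearMap.ker M)
      ≤ Module.finrank K (LinearMap.range (L1.domRestrict (LinearMap.ker L2))) := by
    apply Submodule.finrank_mono
    intro A hA
    have hA' : A * G = 0 := hA
    refine ⟨⟨F' * A, ?_⟩, ?_⟩
    · change F' * A * G = 0
      rw [Matrix.mul_assoc, hA', Matrix.mul_zero]
    · change F * (F' * A) = A
      rw [← Matrix.mul_assoc, hF', Matrix.one_mul]
  have e8 : Module.finrank K (LinearMap.ker (L1.domRestrict (LinearMap.ker L2)))
      = Module.finrank K (LinearMap.ker (L1.prod L2)) := by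
    rw [← Submodule.finrank_map_subtype_eq]
    congr 2
    all_goals
      ext E
      simp [LinearMap.mem_ker, and_comm]
  have key : c * s + Module.finrank K (LinearMap.range L2)
      ≤ Module.finrank K (LinearMap.range (L1.prod L2)) + c * d := by
    omega
  have key' : (c : ℝ) * s + Module.finrank K (LinearMap.range L2)
      ≤ Module.finrank K (LinearMap.range (L1.prod L2)) + (c : ℝ) * d := by
    exact_mod_cast key
  linarith
end

section
/- Let c, d, s be positive integers with c ≤ s and d ≤ s, and let q be a prime power. Let F be a full-rank c×s matrix over F_q and G a full-rank d×s matrix over F_q. Let 𝓕 = I_{s×s} ⊗ F (a cs × s² matrix, the Kronecker product of the s×s identity matrix with F) and 𝓖 = G ⊗ I_{s×s} (a ds × s² matrix). Let 𝓗 be the (c+d)s × s² matrix obtained by vertically stacking 𝓕 on top of 𝓖. Then rank(𝓗) ≥ (c+d)s − cd. -/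
open Matrix Kronecker

theorem exists_right_inv_of_rank {K : Type} [Field K] {c s : ℕ} (F : Matrix (Fin c) (Fin s) K)
    (hF : F.rank = c) : ∃ F' : Matrix (Fin s) (Fin c) K, F * F' = 1 := by
  rw [← Matrix.mulVec_surjective_iff_exists_right_inverse]
  have h : LinearMap.range F.mulVecLin = ⊤ := by
    apply Submodule.eq_top_of_finrank_eq
    have : Module.finrank K (LinearMap.range F.mulVecLin) = c := hF
    rw [this]; simp
  exact LinearMap.range_eq_top.mp h

/-- Let `F` be a full-rank `c × s` matrix and `G` a full-rank `d × s` matrix over a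
finite field with `q` elements (`c, d ≤ s`). Let `𝓕 = I_{s×s} ⊗ F` and
`𝓖 = G ⊗ I_{s×s}` and let `𝓗` be the vertical stacking of `𝓕` on top of `𝓖`.
Then `rank 𝓗 ≥ (c+d)s − cd`. -/
theorem stmt2 (c d s q : ℕ) (hc : 0 < c) (hd : 0 < d) (hs : 0 < s)
    (hcs : c ≤ s) (hds : d ≤ s)
    (K : Type) [Field K] [Fintype K] [DecidableEq K] (hq : Fintype.card K = q)
    (F : Matrix (Fin c) (Fin s) K) (G : Matrix (Fin d) (Fin s) K)
    (hF : F.rank = c) (hG : G.rank = d) :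
    (c + d) * s - c * d ≤
      (Matrix.fromRows ((1 : Matrix (Fin s) (Fin s) K) ⊗ₖ F)
        (G ⊗ₖ (1 : Matrix (Fin s) (Fin s) K))).rank := by
  obtain ⟨F', hF'⟩ := exists_right_inv_of_rank F hF
  obtain ⟨G', hG'⟩ := exists_right_inv_of_rank G hG
  set H := Matrix.fromRows ((1 : Matrix (Fin s) (Fin s) K) ⊗ₖ F)
        (G ⊗ₖ (1 : Matrix (Fin s) (Fin s) K)) with hH
  rw [← Matrix.rank_transpose]
  have hrn := LinearMap.finrank_range_add_finrank_ker (Hᵀ).mulVecLin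
  let φ : ((Fin s × Fin c) ⊕ (Fin d × Fin s) → K) →ₗ[K] (Fin d × Fin c → K) :=
    { toFun := fun v p => ∑ l, v (Sum.inr (p.1, l)) * F' l p.2
      map_add' := by
        intro v w; ext p; simp [add_mul, Finset.sum_add_distrib]
      map_smul' := by
        intro r v; ext p; simp [Finset.mul_sum, mul_assoc] }
  have hinj : Function.Injective (φ.comp (LinearMap.ker (Hᵀ).mulVecLin).subtype) := by
    rw [injective_iff_map_eq_zero]
    rintro ⟨v, hv⟩ h0
    let X : Matrix (Fin s) (Fin c) K := Matrix.of fun i a => v (Sum.inl (i, a))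
    let Y : Matrix (Fin d) (Fin s) K := Matrix.of fun b l => v (Sum.inr (b, l))
    have hYF : Y * F' = 0 := by
      ext b a
      exact congrFun h0 (b, a)
    have hXY : X * F + Gᵀ * Y = 0 := by
      ext j k
      have := congrFun (LinearMap.mem_ker.mp hv) (j, k)
      simp only [hH, Matrix.mulVecLin_apply, Matrix.mulVec, dotProduct, Fintype.sum_sum_type,
        Matrix.transpose_apply, Matrix.fromRows_apply_inl, Matrix.fromRows_apply_inr,
        Matrix.kroneckerMap_apply, Fintype.sum_prod_type, Matrix.one_apply, Pi.zero_apply] at this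
      simp only [ite_mul, mul_ite, one_mul, mul_one, zero_mul, mul_zero, Finset.sum_ite_irrel,
        Finset.sum_const_zero, Finset.sum_ite_eq', Finset.mem_univ, if_true] at this
      simp only [Matrix.add_apply, Matrix.mul_apply, Matrix.transpose_apply, Matrix.zero_apply]
      rw [← this]
      simp only [X, Y, Matrix.of_apply]
      congr 1
      exact Finset.sum_congr rfl fun _ _ => mul_comm _ _
    have hX : X = 0 := by
      have := congrArg (· * F') hXY
      simpa [Matrix.add_mul, Matrix.mul_assoc, hF', hYF] using this
    have hY : Y = 0 := by
      have h1 : G'ᵀ * Gᵀ = 1 := by rw [← Matrix.transpose_mul, hG', Matrix.transpose_one]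
      have := congrArg (G'ᵀ * ·) hXY
      simpa [hX, ← Matrix.mul_assoc, h1] using this
    apply Subtype.ext
    ext p
    rcases p with ⟨i, a⟩ | ⟨b, l⟩
    · exact congrFun (congrFun hX i) a
    · exact congrFun (congrFun hY b) l
  have hle := LinearMap.finrank_le_finrank_of_injective hinj
  have e : (Hᵀ).rank = Module.finrank K (LinearMap.range (Hᵀ).mulVecLin) := rfl
  rw [← e] at hrn
  simp only [Module.finrank_fintype_fun_eq_card, Fintype.card_sum, Fintype.card_prod,
    Fintype.card_fin] at hrn hle
  have : (c + d) * s = s * c + d * s := by ring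
  have : c * d = d * c := by ring
  omega
end

section
/- Let q be a prime power and s, c, r positive integers with gcd(s, q−1) = 1 and c ≤ s − 1. Let S be a subset of F_q with |S| = r(s−1), and let γ = (γ_0, ..., γ_{s−1}) ∈ F_q^s be a fixed nonzero vector. Let (λ_1, ..., λ_c) be chosen uniformly at random among all c-tuples of pairwise distinct elements of S. Then the probability that Σ_{j=0}^{s−1} γ_j · (λ_i^s)^j = 0 holds simultaneously for all i ∈ {1, ..., c} is at most (1/r)^c. -/
open Finset

lemma card_inj_tuples {K : Type} [Fintype K] [DecidableEq K] (T : Finset K) (c : ℕ) :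
    (Finset.univ.filter (fun f : Fin c → K =>
        (∀ i, f i ∈ T) ∧ Function.Injective f)).card = T.card.descFactorial c := by
  have h := Fintype.card_embedding_eq (α := Fin c) (β := T)
  rw [Fintype.card_coe, Fintype.card_fin] at h
  rw [← h, ← Finset.card_univ]
  symm
  refine Finset.card_bij (fun e _ => fun i => (e i : K)) ?_ ?_ ?_
  · intro e _
    simp only [Finset.mem_filter, Finset.mem_univ, true_and]
    exact ⟨fun i => (e i).2, fun a b hab => e.injective (Subtype.ext hab)⟩
  · intro a _ b _ hab
    ext i
    exact congrFun hab i
  · intro f hf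
    simp only [Finset.mem_filter, Finset.mem_univ, true_and] at hf
    exact ⟨⟨fun i => ⟨f i, hf.1 i⟩, fun a b hab => hf.2 (congrArg Subtype.val hab)⟩,
      Finset.mem_univ _, rfl⟩

lemma descFactorial_mul_pow_le (d m r : ℕ) (hr : 0 < r) (hd : d ≤ m) (c : ℕ) :
    d.descFactorial c * r ^ c ≤ (r * m).descFactorial c := by
  induction c with
  | zero => simp
  | succ c ih =>
    rw [Nat.descFactorial_succ, Nat.descFactorial_succ, pow_succ]
    have h1 : (d - c) * r ≤ r * m - c := by
      rw [Nat.sub_mul]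
      have : d * r ≤ r * m := by rw [mul_comm]; exact Nat.mul_le_mul_left _ hd
      have : c ≤ c * r := Nat.le_mul_of_pos_right _ hr
      omega
    calc (d - c) * d.descFactorial c * (r ^ c * r)
        = ((d - c) * r) * (d.descFactorial c * r ^ c) := by ring
      _ ≤ _ := Nat.mul_le_mul h1 ih

lemma pow_inj_of_coprime {K : Type} [Field K] [Fintype K] (s : ℕ) (hs : 0 < s)
    (hgcd : Nat.gcd s (Fintype.card K - 1) = 1) :
    Function.Injective (fun x : K => x ^ s) := by
  intro x y hxy
  simp only at hxy
  by_cases hy : y = 0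
  · subst hy
    rw [zero_pow hs.ne'] at hxy
    exact eq_zero_of_pow_eq_zero hxy
  · have hx : x ≠ 0 := by
      rintro rfl
      rw [zero_pow hs.ne'] at hxy
      exact hy (eq_zero_of_pow_eq_zero hxy.symm)
    have h1 : (x / y) ^ s = 1 := by
      rw [div_pow, hxy, div_self (pow_ne_zero _ hy)]
    have h2 := FiniteField.pow_card_sub_one_eq_one (x / y) (div_ne_zero hx hy)
    have h3 := Nat.dvd_gcd (orderOf_dvd_of_pow_eq_one h1) (orderOf_dvd_of_pow_eq_one h2)
    rw [hgcd, Nat.dvd_one, orderOf_eq_one_iff] at h3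
    exact (div_eq_one_iff_eq hy).1 h3

lemma card_roots_le {K : Type} [Field K] [DecidableEq K] (s : ℕ) (hs : 0 < s)
    (γ : Fin s → K) (hγ : γ ≠ 0) (T : Finset K)
    (hT : ∀ x ∈ T, ∑ j : Fin s, γ j * x ^ (j : ℕ) = 0) : T.card ≤ s - 1 := by
  by_contra hlt
  apply hγ
  have hle : s ≤ T.card := by omega
  obtain ⟨U, hU, hUc⟩ := Finset.exists_subset_card_eq hle
  let e := U.equivFinOfCardEq hUc
  apply Matrix.eq_zero_of_forall_index_sum_mul_pow_eq_zero
    (f := fun i => ((e.symm i : U) : K))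
  · exact Subtype.val_injective.comp e.symm.injective
  · intro i
    exact hT _ (hU (e.symm i).2)


/-- Let `F_q` be a finite field with `q` elements, `gcd(s, q−1) = 1`, `c ≤ s−1`,
`S ⊆ F_q` with `|S| = r(s−1)`, and `γ ∈ F_q^s` a fixed nonzero vector.  If
`(λ_1, …, λ_c)` is chosen uniformly at random among all `c`-tuples of pairwise
distinct elements of `S`, then the probability that
`∑_j γ_j (λ_i^s)^j = 0` for all `i` is at most `(1/r)^c`. -/
theorem stmt12 (s c r : ℕ) (hs : 0 < s) (hc : 0 < c) (hr : 0 < r)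
    (hcs : c ≤ s - 1)
    (K : Type) [Field K] [Fintype K] [DecidableEq K]
    (q : ℕ) (hq : Fintype.card K = q)
    (hgcd : Nat.gcd s (q - 1) = 1)
    (S : Finset K) (hS : S.card = r * (s - 1))
    (γ : Fin s → K) (hγ : γ ≠ 0) :
    ((Finset.univ.filter (fun f : Fin c → K =>
        ((∀ i, f i ∈ S) ∧ Function.Injective f) ∧
          ∀ i : Fin c, ∑ j : Fin s, γ j * (f i ^ s) ^ (j : ℕ) = 0)).card : ℝ) /
      ((Finset.univ.filter (fun f : Fin c → K =>
        (∀ i, f i ∈ S) ∧ Function.Injective f)).card : ℝ)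
      ≤ (1 / (r : ℝ)) ^ c := by
  subst hq
  set T := S.filter (fun x => ∑ j : Fin s, γ j * (x ^ s) ^ (j : ℕ) = 0) with hTdef
  have hT : T.card ≤ s - 1 := by
    rw [← Finset.card_image_of_injective T (pow_inj_of_coprime s hs hgcd)]
    apply card_roots_le s hs γ hγ
    intro x hx
    obtain ⟨y, hy, rfl⟩ := Finset.mem_image.1 hx
    exact (Finset.mem_filter.1 hy).2
  have hnum : (Finset.univ.filter (fun f : Fin c → K =>
        ((∀ i, f i ∈ S) ∧ Function.Injective f) ∧
          ∀ i : Fin c, ∑ j : Fin s, γ j * (f i ^ s) ^ (j : ℕ) = 0)).card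
      = T.card.descFactorial c := by
    rw [← card_inj_tuples]
    congr 1
    ext f
    simp only [hTdef, Finset.mem_filter, Finset.mem_univ, true_and, forall_and]
    tauto
  rw [hnum, card_inj_tuples, hS]
  have key := descFactorial_mul_pow_le T.card (s - 1) r hr hT c
  have hpos : 0 < (r * (s - 1)).descFactorial c :=
    Nat.pos_of_ne_zero (fun h => by
      rw [Nat.descFactorial_eq_zero_iff_lt] at h
      have : s - 1 ≤ r * (s - 1) := Nat.le_mul_of_pos_left _ hr
      omega)
  rw [one_div, inv_pow, ← one_div, div_le_div_iff₀ (by exact_mod_cast hpos) (by positivity), one_mul]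
  exact_mod_cast key
end
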